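/- Let Z₁ and Z₂ be independent random variables on a probability space, each standard normally distributed (law gaussianReal 0 1). Let μ₁, μ₂ ∈ ℝ, σ₁, σ₂ > 0, ρ ∈ (-1,1), and define X₁ = μ₁ + σ₁·Z₁ and X₂ = μ₂ + σ₂·(ρ·Z₁ + √(1-ρ²)·Z₂). Set θ = √(σ₁² + σ₂² − 2ρσ₁σ₂) (assumed positive) and δ = (μ₂ − μ₁)/θ, and let Y = min{X₁, X₂}. Then E[Y²] = (σ₁² + μ₁²)·Φ(δ) + (σ₂² + μ₂²)·Φ(−δ) − (μ₁ + μ₂)·θ·φ(δ), where φ and Φ denote the probability density function and cumulative distribution function of the standard normal distribution. -/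

import Mathlib

open MeasureTheory ProbabilityTheory

/-- The standard normal probability density function `φ`. -/
noncomputable def stdNormalPdf (x : ℝ) : ℝ :=
  (Real.sqrt (2 * Real.pi))⁻¹ * Real.exp (-x ^ 2 / 2)

/-- The standard normal cumulative distribution function `Φ`. -/
noncomputable def stdNormalCdf (x : ℝ) : ℝ :=
  ∫ t in Set.Iic x, stdNormalPdf t

/-!
Let `(X, Y)` be jointly Gaussian, `θ² = Var (X - Y)` and `U = (X - Y - E[X - Y]) / θ`, so that
`U` is standard normal and `{X ≤ Y} = {U ≤ δ}` with `δ = (E Y - E X) / θ`. Since `min X Y` is `X`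
on this event and `Y` off it, `E[(min X Y)²] = E[X²; U ≤ δ] + E[Y²] - E[Y²; U ≤ δ]`. Writing
`X = c U + (X - c U)` with `c = cov(X, U)`, the residual is uncorrelated with `U`, hence
independent of it, and the truncated moments of `U` of order at most two, obtained by integrating
the derivative of `xⁿ φ(x)`, give
`E[X²; U ≤ δ] = (Var X + (E X)²) Φ(δ) - (2 c E X + c² δ) φ(δ)`. In the difference of the two such
terms the coefficient of `φ(δ)` collapses because `cov(X, U) - cov(Y, U) = θ` and
`θ δ = E Y - E X`.
-/

section StdNormal

lemma gaussianPDFReal_zero_one : gaussianPDFReal 0 1 = stdNormalPdf := by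
  ext x
  simp [gaussianPDFReal, stdNormalPdf]

lemma stdNormalPdf_neg (x : ℝ) : stdNormalPdf (-x) = stdNormalPdf x := by
  simp [stdNormalPdf]

lemma integrable_stdNormalPdf : Integrable stdNormalPdf :=
  gaussianPDFReal_zero_one ▸ integrable_gaussianPDFReal 0 1

lemma integral_stdNormalPdf : ∫ x, stdNormalPdf x = 1 := by
  rw [← gaussianPDFReal_zero_one]
  exact integral_gaussianPDFReal_eq_one 0 one_ne_zero

lemma stdNormalCdf_neg (x : ℝ) : stdNormalCdf (-x) = 1 - stdNormalCdf x := by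
  calc stdNormalCdf (-x)
      = ∫ t in Set.Iic (-x), stdNormalPdf (-t) := by simp_rw [stdNormalPdf_neg]; rfl
    _ = ∫ t in (Set.Iic x)ᶜ, stdNormalPdf t := by
        rw [integral_comp_neg_Iic, neg_neg, Set.compl_Iic]
    _ = 1 - stdNormalCdf x := by
        rw [setIntegral_compl measurableSet_Iic integrable_stdNormalPdf, integral_stdNormalPdf]
        rfl

lemma hasDerivAt_stdNormalPdf (x : ℝ) : HasDerivAt stdNormalPdf (-x * stdNormalPdf x) x := by
  have hexponent : HasDerivAt (fun t : ℝ => -t ^ 2 / 2) (-x) x :=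
    ((hasDerivAt_pow 2 x).neg.div_const 2).congr_deriv (by norm_num; ring)
  exact (hexponent.exp.const_mul _).congr_deriv (by rw [stdNormalPdf]; ring)

lemma hasDerivAt_pow_mul_stdNormalPdf (n : ℕ) (x : ℝ) :
    HasDerivAt (fun t => t ^ n * stdNormalPdf t)
      (n * (x ^ (n - 1) * stdNormalPdf x) - x ^ (n + 1) * stdNormalPdf x) x :=
  ((hasDerivAt_pow n x).mul (hasDerivAt_stdNormalPdf x)).congr_deriv (by ring)

lemma integrable_pow_mul_stdNormalPdf (n : ℕ) : Integrable fun x => x ^ n * stdNormalPdf x := by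
  have hgaussian := integrable_rpow_mul_exp_neg_mul_sq (b := 1 / 2) (by norm_num) (s := n)
    (neg_one_lt_zero.trans_le n.cast_nonneg)
  refine (hgaussian.const_mul (√(2 * Real.pi))⁻¹).congr (ae_of_all _ fun x => ?_)
  simp only [stdNormalPdf, Real.rpow_natCast]
  ring_nf

lemma integrable_deriv_pow_mul_stdNormalPdf (n : ℕ) :
    Integrable fun x => n * (x ^ (n - 1) * stdNormalPdf x) - x ^ (n + 1) * stdNormalPdf x :=
  ((integrable_pow_mul_stdNormalPdf _).const_mul _).sub (integrable_pow_mul_stdNormalPdf _)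

lemma tendsto_pow_mul_stdNormalPdf_atBot (n : ℕ) :
    Filter.Tendsto (fun x => x ^ n * stdNormalPdf x) Filter.atBot (nhds 0) :=
  tendsto_zero_of_hasDerivAt_of_integrableOn_Iic (a := 0)
    (fun x _ => hasDerivAt_pow_mul_stdNormalPdf n x)
    (integrable_deriv_pow_mul_stdNormalPdf n).integrableOn
    (integrable_pow_mul_stdNormalPdf n).integrableOn

lemma integral_Iic_pow_succ_mul_stdNormalPdf (n : ℕ) (z : ℝ) :
    ∫ x in Set.Iic z, x ^ (n + 1) * stdNormalPdf x =
      n * (∫ x in Set.Iic z, x ^ (n - 1) * stdNormalPdf x) - z ^ n * stdNormalPdf z := by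
  have hftc := integral_Iic_of_hasDerivAt_of_tendsto' (a := z)
    (fun x _ => hasDerivAt_pow_mul_stdNormalPdf n x)
    (integrable_deriv_pow_mul_stdNormalPdf n).integrableOn (tendsto_pow_mul_stdNormalPdf_atBot n)
  rw [integral_sub ((integrable_pow_mul_stdNormalPdf _).const_mul _).integrableOn
    (integrable_pow_mul_stdNormalPdf _).integrableOn, integral_const_mul] at hftc
  linarith

lemma setIntegral_gaussianReal_zero_one (f : ℝ → ℝ) {s : Set ℝ} (hs : MeasurableSet s) :
    ∫ x in s, f x ∂gaussianReal 0 1 = ∫ x in s, f x * stdNormalPdf x := by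
  rw [gaussianReal_of_var_ne_zero 0 one_ne_zero,
    setIntegral_withDensity_eq_setIntegral_toReal_smul (measurable_gaussianPDF 0 1)
      (ae_of_all _ fun _ => gaussianPDF_lt_top) f hs]
  simp only [toReal_gaussianPDF, gaussianPDFReal_zero_one, smul_eq_mul, mul_comm]

lemma setIntegral_Iic_sq_affine_add_const_gaussianReal (a b w z : ℝ) :
    ∫ u in Set.Iic z, ((a + b * u) ^ 2 + w) ∂gaussianReal 0 1 =
      (a ^ 2 + b ^ 2 + w) * stdNormalCdf z - (2 * a * b + b ^ 2 * z) * stdNormalPdf z := by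
  have hint (n : ℕ) (k : ℝ) : IntegrableOn (fun u => k * (u ^ n * stdNormalPdf u)) (Set.Iic z) :=
    ((integrable_pow_mul_stdNormalPdf n).const_mul k).integrableOn
  have hzeroth : ∫ u in Set.Iic z, u ^ 0 * stdNormalPdf u = stdNormalCdf z := by
    simp only [pow_zero, one_mul, stdNormalCdf]
  have hfirst : ∫ u in Set.Iic z, u ^ 1 * stdNormalPdf u = -stdNormalPdf z := by
    simpa using integral_Iic_pow_succ_mul_stdNormalPdf 0 z
  have hsecond : ∫ u in Set.Iic z, u ^ 2 * stdNormalPdf u =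
      stdNormalCdf z - z * stdNormalPdf z := by
    simpa [stdNormalCdf] using integral_Iic_pow_succ_mul_stdNormalPdf 1 z
  have hexpand (u : ℝ) : ((a + b * u) ^ 2 + w) * stdNormalPdf u =
      (a ^ 2 + w) * (u ^ 0 * stdNormalPdf u) + 2 * a * b * (u ^ 1 * stdNormalPdf u) +
        b ^ 2 * (u ^ 2 * stdNormalPdf u) := by ring
  rw [setIntegral_gaussianReal_zero_one _ measurableSet_Iic]
  simp_rw [hexpand]
  rw [integral_add (by exact (hint 0 _).add (hint 1 _)) (hint 2 _),
    integral_add (hint 0 _) (hint 1 _), integral_const_mul, integral_const_mul,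
    integral_const_mul, hzeroth, hfirst, hsecond]
  ring

end StdNormal

section SecondMoment

variable {Ω : Type*} {mΩ : MeasurableSpace Ω} {P : Measure Ω} {X Y : Ω → ℝ}

lemma integral_sq_eq_variance_add_sq [IsProbabilityMeasure P] (hX : MemLp X 2 P) :
    ∫ ω, X ω ^ 2 ∂P = Var[X; P] + P[X] ^ 2 := by
  rw [variance_eq_sub hX]
  simp

lemma integral_const_add_sq [IsProbabilityMeasure P] {W : Ω → ℝ} (hW : MemLp W 2 P) (a : ℝ) :
    ∫ ω, (a + W ω) ^ 2 ∂P = (a + P[W]) ^ 2 + Var[W; P] := by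
  rw [integral_sq_eq_variance_add_sq (by exact (memLp_const a).add hW),
    variance_const_add hW.aestronglyMeasurable,
    integral_add (integrable_const a) (hW.integrable one_le_two), integral_const, probReal_univ,
    one_smul, add_comm]

lemma setIntegral_preimage_add_sq_of_indepFun [IsProbabilityMeasure P]
    {𝓧 : Type*} {m𝓧 : MeasurableSpace 𝓧} {ν : Measure 𝓧} {U : Ω → 𝓧} {W : Ω → ℝ} {f : 𝓧 → ℝ}
    {s : Set 𝓧} (hUW : IndepFun U W P) (hU : HasLaw U ν P) (hf : MemLp f 2 ν) (hW : MemLp W 2 P)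
    (hs : MeasurableSet s) :
    ∫ ω in U ⁻¹' s, (f (U ω) + W ω) ^ 2 ∂P = ∫ u in s, ((f u + P[W]) ^ 2 + Var[W; P]) ∂ν := by
  have hν : IsProbabilityMeasure ν := hU.isProbabilityMeasure_iff.1 inferInstance
  have hWlaw : HasLaw W (P.map W) P := ⟨hW.aemeasurable, rfl⟩
  have hWid : MemLp id 2 (P.map W) :=
    (memLp_map_measure_iff aestronglyMeasurable_id hW.aemeasurable).2 hW
  have hprob : IsProbabilityMeasure (P.map W) := Measure.isProbabilityMeasure_map hW.aemeasurable
  have hjoint : HasLaw (fun ω => (U ω, W ω)) (ν.prod (P.map W)) P := hUW.hasLaw_prod hU hWlaw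
  have hint : Integrable (fun p : 𝓧 × ℝ => (f p.1 + p.2) ^ 2) (ν.prod (P.map W)) :=
    ((hf.comp_fst _).add (hWid.comp_snd ν)).integrable_sq
  calc ∫ ω in U ⁻¹' s, (f (U ω) + W ω) ^ 2 ∂P
      = ∫ p in s ×ˢ Set.univ, (f p.1 + p.2) ^ 2 ∂ν.prod (P.map W) := by
        rw [← hjoint.map_eq] at hint ⊢
        rw [setIntegral_map (hs.prod .univ) hint.aestronglyMeasurable hjoint.aemeasurable,
          Set.mk_preimage_prod, Set.preimage_univ, Set.inter_univ]
    _ = ∫ u in s, ∫ w, (f u + w) ^ 2 ∂P.map W ∂ν := by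
        rw [setIntegral_prod _ hint.integrableOn]
        simp only [setIntegral_univ]
    _ = ∫ u in s, ((f u + P[W]) ^ 2 + Var[W; P]) ∂ν := by
        have hinner (u : 𝓧) := integral_const_add_sq hWid (f u)
        simp only [id] at hinner
        simp only [hinner, hWlaw.integral_eq, hWlaw.variance_eq]

lemma integral_affine [IsProbabilityMeasure P] (hX : Integrable X P) (hY : Integrable Y P)
    (a b c : ℝ) : ∫ ω, (a * X ω + b * Y ω + c) ∂P = a * P[X] + b * P[Y] + c := by
  rw [integral_add (by exact (hX.const_mul a).add (hY.const_mul b)) (integrable_const c),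
    integral_add (hX.const_mul a) (hY.const_mul b), integral_const_mul, integral_const_mul,
    integral_const, probReal_univ, one_smul]

lemma variance_affine_of_indepFun [IsProbabilityMeasure P] (hX : MemLp X 2 P) (hY : MemLp Y 2 P)
    (hXY : IndepFun X Y P) (a b c : ℝ) :
    Var[fun ω => a * X ω + b * Y ω + c; P] = a ^ 2 * Var[X; P] + b ^ 2 * Var[Y; P] := by
  have hind : IndepFun (fun ω => a * X ω) (fun ω => b * Y ω) P :=
    hXY.comp (measurable_const_mul a) (measurable_const_mul b)
  have haX : MemLp (fun ω => a * X ω) 2 P := hX.const_mul a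
  have hbY : MemLp (fun ω => b * Y ω) 2 P := hY.const_mul b
  rw [variance_add_const (by exact (haX.add hbY).aestronglyMeasurable),
    hind.variance_fun_add haX hbY, variance_const_mul, variance_const_mul]

lemma integral_min_sq (hX : MemLp X 2 P) (hY : MemLp Y 2 P) :
    ∫ ω, min (X ω) (Y ω) ^ 2 ∂P =
      ∫ ω in {ω | X ω ≤ Y ω}, X ω ^ 2 ∂P +
        (∫ ω, Y ω ^ 2 ∂P - ∫ ω in {ω | X ω ≤ Y ω}, Y ω ^ 2 ∂P) := by
  have hle : NullMeasurableSet {ω | X ω ≤ Y ω} P :=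
    nullMeasurableSet_le hX.aemeasurable hY.aemeasurable
  have hmin : MemLp (fun ω => min (X ω) (Y ω)) 2 P := hX.inf hY
  rw [← integral_add_compl₀ hle hmin.integrable_sq, ← integral_add_compl₀ hle hY.integrable_sq,
    add_sub_cancel_left]
  congr 1
  · refine setIntegral_congr_fun₀ hle fun ω hω => ?_
    rw [min_eq_left hω]
  · refine setIntegral_congr_fun₀ hle.compl fun ω (hω : ¬X ω ≤ Y ω) => ?_
    rw [min_eq_right (not_le.1 hω).le]

end SecondMoment

section JointlyGaussian

variable {Ω : Type*} {mΩ : MeasurableSpace Ω} {P : Measure Ω} {X Y U : Ω → ℝ}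

lemma hasGaussianLaw_add_const {E : Type*} [NormedAddCommGroup E] [NormedSpace ℝ E]
    [MeasurableSpace E] [BorelSpace E] [SecondCountableTopology E] [CompleteSpace E] {V : Ω → E}
    (hV : HasGaussianLaw V P) (c : E) : HasGaussianLaw (fun ω => V ω + c) P where
  isGaussian_map := by
    have := hV.isGaussian_map
    have hmap := AEMeasurable.map_map_of_aemeasurable
      (measurable_add_const c).aemeasurable hV.aemeasurable
    rw [Function.comp_def] at hmap
    rw [← hmap]
    infer_instance

lemma hasGaussianLaw_prodMk_affine (hXY : HasGaussianLaw (fun ω => (X ω, Y ω)) P)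
    (a b c a' b' c' : ℝ) :
    HasGaussianLaw (fun ω => (a * X ω + b * Y ω + c, a' * X ω + b' * Y ω + c')) P :=
  hasGaussianLaw_add_const
    (hXY.map_fun
      ((a • ContinuousLinearMap.fst ℝ ℝ ℝ + b • ContinuousLinearMap.snd ℝ ℝ ℝ).prod
        (a' • ContinuousLinearMap.fst ℝ ℝ ℝ + b' • ContinuousLinearMap.snd ℝ ℝ ℝ)))
    (c, c')

lemma hasLaw_standardize (hX : HasGaussianLaw X P) (hvar : Var[X; P] ≠ 0) :
    HasLaw (fun ω => (X ω - P[X]) / √(Var[X; P])) (gaussianReal 0 1) P := by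
  have hlaw : HasLaw X (gaussianReal P[X] Var[X; P].toNNReal) P :=
    ⟨hX.aemeasurable, hX.map_eq_gaussianReal⟩
  convert gaussianReal_div_const (gaussianReal_sub_const hlaw P[X]) √(Var[X; P]) using 2
  · simp
  · ext
    simp [Real.sq_sqrt, variance_nonneg, hvar]

lemma indepFun_sub_mul_of_covariance_eq (hXU : HasGaussianLaw (fun ω => (X ω, U ω)) P) {β : ℝ}
    (hβ : cov[X, U; P] = β * Var[U; P]) : IndepFun U (fun ω => X ω - β * U ω) P := by
  have := hXU.isProbabilityMeasure
  have hpair : HasGaussianLaw (fun ω => (U ω, X ω - β * U ω)) P :=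
    (hasGaussianLaw_prodMk_affine hXU 0 1 0 1 (-β) 0).congr
      (ae_of_all _ fun ω => by ext <;> dsimp only <;> ring)
  refine hpair.indepFun_of_covariance_eq_zero ?_
  rw [covariance_fun_sub_right hXU.snd.memLp_two hXU.fst.memLp_two
    (hXU.snd.memLp_two.const_mul _), covariance_const_mul_right,
    covariance_self hXU.snd.aemeasurable, covariance_comm U X, hβ, sub_self]

lemma variance_sub_mul_of_covariance_eq [IsFiniteMeasure P] (hX : MemLp X 2 P) (hU : MemLp U 2 P)
    {β : ℝ} (hβ : cov[X, U; P] = β * Var[U; P]) :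
    Var[fun ω => X ω - β * U ω; P] = Var[X; P] - β ^ 2 * Var[U; P] := by
  rw [variance_fun_sub hX (hU.const_mul _), covariance_const_mul_right, variance_const_mul, hβ]
  ring

lemma setIntegral_preimage_Iic_sq_of_hasGaussianLaw
    (hXU : HasGaussianLaw (fun ω => (X ω, U ω)) P) (hU : HasLaw U (gaussianReal 0 1) P) (z : ℝ) :
    ∫ ω in U ⁻¹' Set.Iic z, X ω ^ 2 ∂P =
      (Var[X; P] + P[X] ^ 2) * stdNormalCdf z -
        (2 * P[X] * cov[X, U; P] + cov[X, U; P] ^ 2 * z) * stdNormalPdf z := by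
  have := hXU.isProbabilityMeasure
  have hX₂ : MemLp X 2 P := hXU.fst.memLp_two
  have hU₂ : MemLp U 2 P := hXU.snd.memLp_two
  have hmean : P[U] = 0 := by rw [hU.integral_eq, integral_id_gaussianReal]
  have hvar : Var[U; P] = 1 := by rw [hU.variance_eq, variance_id_gaussianReal, NNReal.coe_one]
  set c : ℝ := cov[X, U; P]
  have hslope : cov[X, U; P] = c * Var[U; P] := by rw [hvar, mul_one]
  have hresidual : ∫ ω, (X ω - c * U ω) ∂P = P[X] := by
    rw [integral_sub (hX₂.integrable one_le_two) ((hU₂.integrable one_le_two).const_mul c),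
      integral_const_mul, hmean, mul_zero, sub_zero]
  calc ∫ ω in U ⁻¹' Set.Iic z, X ω ^ 2 ∂P
      = ∫ ω in U ⁻¹' Set.Iic z, (c * U ω + (X ω - c * U ω)) ^ 2 ∂P := by
        simp only [add_sub_cancel]
    _ = ∫ u in Set.Iic z, ((P[X] + c * u) ^ 2 + (Var[X; P] - c ^ 2)) ∂gaussianReal 0 1 := by
        rw [setIntegral_preimage_add_sq_of_indepFun (f := fun u => c * u)
          (indepFun_sub_mul_of_covariance_eq hXU hslope) hU
          ((memLp_id_gaussianReal' 2 (by simp)).const_mul c) (hX₂.sub (hU₂.const_mul c))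
          measurableSet_Iic, variance_sub_mul_of_covariance_eq hX₂ hU₂ hslope, hvar, hresidual]
        simp only [add_comm (c * _), mul_one]
    _ = _ := by
        rw [setIntegral_Iic_sq_affine_add_const_gaussianReal]
        ring

lemma covariance_standardize [IsProbabilityMeasure P] (hX : MemLp X 2 P) :
    cov[X, fun ω => (X ω - P[X]) / √(Var[X; P]); P] = √(Var[X; P]) := by
  rw [covariance_fun_div_right, covariance_sub_const_right (hX.integrable one_le_two),
    covariance_self hX.aemeasurable, Real.div_sqrt]

theorem second_moment_min_bivariate_gaussian_general
    (hXY : HasGaussianLaw (fun ω => (X ω, Y ω)) P) {θ δ : ℝ}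
    (hθ : θ = √(Var[fun ω => X ω - Y ω; P])) (hθpos : 0 < θ) (hδ : δ = (P[Y] - P[X]) / θ) :
    ∫ ω, min (X ω) (Y ω) ^ 2 ∂P =
      (Var[X; P] + P[X] ^ 2) * stdNormalCdf δ + (Var[Y; P] + P[Y] ^ 2) * stdNormalCdf (-δ) -
        (P[X] + P[Y]) * θ * stdNormalPdf δ := by
  have := hXY.isProbabilityMeasure
  have hX : MemLp X 2 P := hXY.fst.memLp_two
  have hY : MemLp Y 2 P := hXY.snd.memLp_two
  let U : Ω → ℝ := fun ω => (X ω - Y ω - ∫ ω, (X ω - Y ω) ∂P) / θ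
  have hU : HasLaw U (gaussianReal 0 1) P := by
    have hvar : Var[fun ω => X ω - Y ω; P] ≠ 0 := (Real.sqrt_pos.1 (hθ ▸ hθpos)).ne'
    simpa only [U, hθ] using hasLaw_standardize hXY.fun_sub hvar
  have hXU : HasGaussianLaw (fun ω => (X ω, U ω)) P :=
    (hasGaussianLaw_prodMk_affine hXY 1 0 0 θ⁻¹ (-θ⁻¹) (-(∫ ω, (X ω - Y ω) ∂P) / θ)).congr
      (ae_of_all _ fun ω => by ext <;> dsimp only [U] <;> ring)
  have hYU : HasGaussianLaw (fun ω => (Y ω, U ω)) P :=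
    (hasGaussianLaw_prodMk_affine hXY 0 1 0 θ⁻¹ (-θ⁻¹) (-(∫ ω, (X ω - Y ω) ∂P) / θ)).congr
      (ae_of_all _ fun ω => by ext <;> dsimp only [U] <;> ring)
  have hcov : cov[X, U; P] - cov[Y, U; P] = θ := by
    rw [← covariance_fun_sub_left hX hY hXU.snd.memLp_two]
    simpa only [U, hθ] using covariance_standardize (X := fun ω => X ω - Y ω) (hX.sub hY)
  have hθδ : θ * δ = P[Y] - P[X] := by rw [hδ, mul_div_cancel₀ _ hθpos.ne']
  have hevent : {ω | X ω ≤ Y ω} = U ⁻¹' Set.Iic δ := by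
    ext ω
    simp only [U, Set.mem_ofPred_eq, Set.mem_preimage, Set.mem_Iic, hδ,
      div_le_div_iff_of_pos_right hθpos, integral_sub (hX.integrable one_le_two)
        (hY.integrable one_le_two)]
    constructor <;> intro <;> linarith
  rw [integral_min_sq hX hY, hevent, setIntegral_preimage_Iic_sq_of_hasGaussianLaw hXU hU,
    setIntegral_preimage_Iic_sq_of_hasGaussianLaw hYU hU, integral_sq_eq_variance_add_sq hY,
    stdNormalCdf_neg]
  linear_combination -stdNormalPdf δ * (((cov[X, U; P] + cov[Y, U; P]) * δ + P[X] + P[Y]) * hcov +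
    (cov[X, U; P] + cov[Y, U; P]) * hθδ)

lemma integral_min_affine_sq_of_indepFun (hX : HasLaw X (gaussianReal 0 1) P)
    (hY : HasLaw Y (gaussianReal 0 1) P) (hXY : IndepFun X Y P) (a b c a' b' c' : ℝ) {θ δ : ℝ}
    (hθ : θ = √((a - a') ^ 2 + (b - b') ^ 2)) (hθpos : 0 < θ) (hδ : δ = (c' - c) / θ) :
    ∫ ω, min (a * X ω + b * Y ω + c) (a' * X ω + b' * Y ω + c') ^ 2 ∂P =
      (a ^ 2 + b ^ 2 + c ^ 2) * stdNormalCdf δ + (a' ^ 2 + b' ^ 2 + c' ^ 2) * stdNormalCdf (-δ) -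
        (c + c') * θ * stdNormalPdf δ := by
  have hpair : HasGaussianLaw (fun ω => (X ω, Y ω)) P :=
    hXY.hasGaussianLaw hX.hasGaussianLaw hY.hasGaussianLaw
  have := hpair.isProbabilityMeasure
  have hmean (p q r : ℝ) : ∫ ω, (p * X ω + q * Y ω + r) ∂P = r := by
    rw [integral_affine hpair.fst.integrable hpair.snd.integrable, hX.integral_eq, hY.integral_eq,
      integral_id_gaussianReal, mul_zero, mul_zero, zero_add, zero_add]
  have hvar (p q r : ℝ) : Var[fun ω => p * X ω + q * Y ω + r; P] = p ^ 2 + q ^ 2 := by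
    rw [variance_affine_of_indepFun hpair.fst.memLp_two hpair.snd.memLp_two hXY, hX.variance_eq,
      hY.variance_eq, variance_id_gaussianReal, NNReal.coe_one, mul_one, mul_one]
  have hsub (ω : Ω) : a * X ω + b * Y ω + c - (a' * X ω + b' * Y ω + c') =
      (a - a') * X ω + (b - b') * Y ω + (c - c') := by ring
  have hmin := second_moment_min_bivariate_gaussian_general (θ := θ) (δ := δ)
    (hasGaussianLaw_prodMk_affine hpair a b c a' b' c') (by simp only [hsub, hvar, hθ]) hθpos
    (by simp only [hmean, hδ])
  simpa only [hmean, hvar] using hmin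

end JointlyGaussian

/-- The second moment of the minimum of two jointly Gaussian random variables:
`E[Y²] = (σ₁²+μ₁²)·Φ(δ) + (σ₂²+μ₂²)·Φ(−δ) − (μ₁+μ₂)·θ·φ(δ)`. -/
theorem second_moment_min_bivariate_gaussian
    {Ω : Type*} [MeasureSpace Ω] [IsProbabilityMeasure (ℙ : Measure Ω)]
    (Z₁ Z₂ : Ω → ℝ) (hZ₁m : Measurable Z₁) (hZ₂m : Measurable Z₂)
    (hZ₁ : Measure.map Z₁ ℙ = gaussianReal 0 1)
    (hZ₂ : Measure.map Z₂ ℙ = gaussianReal 0 1)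
    (hindep : IndepFun Z₁ Z₂ ℙ)
    (μ₁ μ₂ σ₁ σ₂ ρ : ℝ) (hσ₁ : 0 < σ₁) (hσ₂ : 0 < σ₂)
    (hρ : ρ ∈ Set.Ioo (-1 : ℝ) 1)
    (X₁ X₂ Y : Ω → ℝ)
    (hX₁ : X₁ = fun ω => μ₁ + σ₁ * Z₁ ω)
    (hX₂ : X₂ = fun ω => μ₂ + σ₂ * (ρ * Z₁ ω + Real.sqrt (1 - ρ ^ 2) * Z₂ ω))
    (hY : Y = fun ω => min (X₁ ω) (X₂ ω))
    (θ δ : ℝ)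
    (hθ : θ = Real.sqrt (σ₁ ^ 2 + σ₂ ^ 2 - 2 * ρ * σ₁ * σ₂))
    (hθpos : 0 < θ)
    (hδ : δ = (μ₂ - μ₁) / θ) :
    ∫ ω, (Y ω) ^ 2 =
      (σ₁ ^ 2 + μ₁ ^ 2) * stdNormalCdf δ + (σ₂ ^ 2 + μ₂ ^ 2) * stdNormalCdf (-δ) -
        (μ₁ + μ₂) * θ * stdNormalPdf δ := by
  have hsqrt : √(1 - ρ ^ 2) ^ 2 = 1 - ρ ^ 2 := Real.sq_sqrt (by nlinarith [hρ.1, hρ.2])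
  have hmin := integral_min_affine_sq_of_indepFun ⟨hZ₁m.aemeasurable, hZ₁⟩
    ⟨hZ₂m.aemeasurable, hZ₂⟩ hindep σ₁ 0 μ₁ (σ₂ * ρ) (σ₂ * √(1 - ρ ^ 2)) μ₂ (θ := θ)
    (by rw [hθ]; congr 1; linear_combination -σ₂ ^ 2 * hsqrt) hθpos hδ
  have hX₁' (ω : Ω) : X₁ ω = σ₁ * Z₁ ω + 0 * Z₂ ω + μ₁ := by rw [hX₁]; ring
  have hX₂' (ω : Ω) : X₂ ω = σ₂ * ρ * Z₁ ω + σ₂ * √(1 - ρ ^ 2) * Z₂ ω + μ₂ := by rw [hX₂]; ring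
  simp only [hY, hX₁', hX₂', hmin]
  linear_combination σ₂ ^ 2 * stdNormalCdf (-δ) * hsqrt
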